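/- (Existence and positivity of hmin, the premise of Proposition 1: 'Let hmin > 0 be the minimum of h(A) over all directed cyclic graphs'.) Let d : ℕ with d ≥ 2. Then there exists a binary adjacency matrix of size d that is not acyclic, and there exists a real number hmin > 0 such that hmin ≤ h(A) for every binary adjacency matrix A of size d that is not acyclic. -/

import Mathlib

/-- A binary adjacency matrix: every entry is 0 or 1. -/
def IsBinary {d : ℕ} (A : Matrix (Fin d) (Fin d) ℝ) : Prop :=
  ∀ i j, A i j = 0 ∨ A i j = 1

/-- The directed graph induced by `A` (edge `i → j` iff `A i j = 1`) is acyclic. -/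
def IsAcyclicMat {d : ℕ} (A : Matrix (Fin d) (Fin d) ℝ) : Prop :=
  Irreflexive (Relation.TransGen (fun i j => A i j = 1))

/-- The smooth acyclicity function `h(A) = trace (exp A) - d`. -/
noncomputable def hAcyc {d : ℕ} (A : Matrix (Fin d) (Fin d) ℝ) : ℝ :=
  Matrix.trace (NormedSpace.exp A) - d

open Classical in
/-- The penalized objective `F(A) = S(A) + λ₁·1[A ∉ DAGs] + λ₂·h(A)`. -/
noncomputable def penObj {d : ℕ} (S : Matrix (Fin d) (Fin d) ℝ → ℝ) (lam1 lam2 : ℝ)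
    (A : Matrix (Fin d) (Fin d) ℝ) : ℝ :=
  S A + lam1 * (if IsAcyclicMat A then (0 : ℝ) else 1) + lam2 * hAcyc A

/-!
Expanding the exponential, `h(A) = ∑_{k ≥ 1} tr(A ^ k) / k!`. For a matrix with nonnegative entries
every term is nonnegative, and a directed cycle of length `k` makes `tr(A ^ k)` positive, so `h` is
positive at every cyclic graph. Finitely many binary matrices exist, so `h` attains its minimum over
the cyclic ones, and this minimum is positive.
-/

open scoped Nat

theorem exists_path_length_pos_of_transGen {V : Type*} [Quiver V] {a b : V}
    (h : Relation.TransGen (fun u v : V ↦ Nonempty (u ⟶ v)) a b) :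
    ∃ p : Quiver.Path a b, 0 < p.length := by
  induction h with
  | single e => exact ⟨e.some.toPath, Nat.one_pos⟩
  | tail _ e ih =>
    obtain ⟨p, -⟩ := ih
    exact ⟨p.cons e.some, Nat.succ_pos _⟩

theorem hasSum_trace_exp {n 𝕂 : Type*} [Fintype n] [DecidableEq n] [RCLike 𝕂]
    (A : Matrix n n 𝕂) :
    HasSum (fun k : ℕ ↦ (A ^ k).trace / k !) (NormedSpace.exp A).trace := by
  have hexp : HasSum (fun k : ℕ ↦ (k ! : 𝕂)⁻¹ • A ^ k) (NormedSpace.exp A) :=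
    -- The exponential only depends on the topology; its series is available for a complete norm.
    open scoped Matrix.Norms.Operator in NormedSpace.exp_series_hasSum_exp' A
  have htrace := hexp.map (Matrix.traceAddMonoidHom n 𝕂) continuous_id.matrix_trace
  simpa only [Function.comp_def, Matrix.traceAddMonoidHom_apply, Matrix.trace_smul, smul_eq_mul,
    inv_mul_eq_div] using htrace

theorem finite_set_matrix {m n α : Type*} [Finite m] [Finite n] {S : Set α} (hS : S.Finite) :
    (S.matrix : Set (Matrix m n α)).Finite := by
  rw [Set.matrix_eq_pi]
  exact (Set.Finite.pi fun _ ↦ Set.Finite.pi fun _ ↦ hS).preimage Matrix.of.symm.injective.injOn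

section Nonneg

variable {n : Type*} [Fintype n] [DecidableEq n]

theorem exists_pow_apply_pos_of_transGen {R : Type*} [Ring R] [LinearOrder R]
    [IsStrictOrderedRing R] {A : Matrix n n R} (hA : ∀ i j, 0 ≤ A i j) {i j : n}
    (h : Relation.TransGen (fun u v ↦ 0 < A u v) i j) : ∃ k ≠ 0, 0 < (A ^ k) i j := by
  let : Quiver n := A.toQuiver
  obtain ⟨p, hp⟩ := exists_path_length_pos_of_transGen (h.mono (fun _ _ e ↦ ⟨.up e⟩) i j)
  exact ⟨p.length, hp.ne', (Matrix.pow_apply_pos_iff_nonempty_path hA _ i j).2 ⟨p, rfl⟩⟩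

theorem trace_pow_nonneg {R : Type*} [Semiring R] [PartialOrder R] [IsOrderedRing R]
    {A : Matrix n n R} (hA : ∀ i j, 0 ≤ A i j) (k : ℕ) : 0 ≤ (A ^ k).trace :=
  Finset.sum_nonneg fun i _ ↦ Matrix.pow_apply_nonneg hA k i i

theorem card_add_trace_pow_div_factorial_le_trace_exp {A : Matrix n n ℝ}
    (hA : ∀ i j, 0 ≤ A i j) {k : ℕ} (hk : k ≠ 0) :
    Fintype.card n + (A ^ k).trace / k ! ≤ (NormedSpace.exp A).trace := by
  have hterm (m : ℕ) : 0 ≤ (A ^ m).trace / m ! :=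
    div_nonneg (trace_pow_nonneg hA m) m !.cast_nonneg
  calc Fintype.card n + (A ^ k).trace / k !
      = ∑ m ∈ {0, k}, (A ^ m).trace / m ! := by simp [Finset.sum_pair hk.symm]
    _ ≤ (NormedSpace.exp A).trace := sum_le_hasSum _ (fun m _ ↦ hterm m) (hasSum_trace_exp A)

theorem card_lt_trace_exp_of_transGen {A : Matrix n n ℝ} (hA : ∀ i j, 0 ≤ A i j)
    {i : n} (hi : Relation.TransGen (fun u v ↦ 0 < A u v) i i) :
    (Fintype.card n : ℝ) < (NormedSpace.exp A).trace := by
  obtain ⟨k, hk, hpos⟩ := exists_pow_apply_pos_of_transGen hA hi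
  have htrace : 0 < (A ^ k).trace :=
    Finset.sum_pos' (fun j _ ↦ Matrix.pow_apply_nonneg hA k j j) ⟨i, Finset.mem_univ i, hpos⟩
  calc (Fintype.card n : ℝ)
      < Fintype.card n + (A ^ k).trace / k ! := lt_add_of_pos_right _ (by positivity)
    _ ≤ (NormedSpace.exp A).trace := card_add_trace_pow_div_factorial_le_trace_exp hA hk

end Nonneg

section Binary

variable {d : ℕ}

theorem finite_setOf_isBinary : {A : Matrix (Fin d) (Fin d) ℝ | IsBinary A}.Finite :=
  finite_set_matrix (Set.toFinite {0, 1})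

theorem IsBinary.nonneg {A : Matrix (Fin d) (Fin d) ℝ} (hA : IsBinary A) (i j : Fin d) :
    0 ≤ A i j := by
  rcases hA i j with h | h <;> simp [h]

theorem not_isAcyclicMat_of_apply_self {A : Matrix (Fin d) (Fin d) ℝ} {i : Fin d}
    (hi : A i i = 1) : ¬ IsAcyclicMat A :=
  fun hA ↦ hA i (.single hi)

theorem IsBinary.hAcyc_pos {A : Matrix (Fin d) (Fin d) ℝ} (hA : IsBinary A)
    (hcyc : ¬ IsAcyclicMat A) : 0 < hAcyc A := by
  obtain ⟨i, hi⟩ : ∃ i, Relation.TransGen (fun u v ↦ A u v = 1) i i :=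
    not_forall_not.1 hcyc
  have hpos : Relation.TransGen (fun u v ↦ 0 < A u v) i i :=
    hi.mono (fun _ _ h ↦ h ▸ one_pos) i i
  simpa only [hAcyc, sub_pos, Fintype.card_fin] using card_lt_trace_exp_of_transGen hA.nonneg hpos

end Binary

theorem exists_hmin (d : ℕ) (hd : 2 ≤ d) :
    (∃ A : Matrix (Fin d) (Fin d) ℝ, IsBinary A ∧ ¬ IsAcyclicMat A) ∧
    (∃ hmin : ℝ, 0 < hmin ∧
      ∀ A : Matrix (Fin d) (Fin d) ℝ, IsBinary A → ¬ IsAcyclicMat A → hmin ≤ hAcyc A) := by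
  have hne : {A : Matrix (Fin d) (Fin d) ℝ | IsBinary A ∧ ¬ IsAcyclicMat A}.Nonempty :=
    ⟨Matrix.of fun _ _ ↦ 1, fun _ _ ↦ .inr rfl,
      not_isAcyclicMat_of_apply_self (i := ⟨0, by omega⟩) rfl⟩
  have hfin : {A : Matrix (Fin d) (Fin d) ℝ | IsBinary A ∧ ¬ IsAcyclicMat A}.Finite :=
    finite_setOf_isBinary.subset fun _ hA ↦ hA.1
  obtain ⟨B, ⟨hB, hBcyc⟩, hmin⟩ := Set.exists_min_image _ hAcyc hfin hne
  exact ⟨hne, hAcyc B, hB.hAcyc_pos hBcyc, fun A hA hcyc ↦ hmin A ⟨hA, hcyc⟩⟩
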